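/- arXiv:math/0208014 — 3 statements merged into one kernel-verified Lean document; each statement's English description precedes it below -/
import Mathlib

section
/- In the max-plus semiring over the reals, for all real numbers γ and δ, the subsemimodule of (ℝ_max)² spanned by the two vectors (γ, 0) and (δ, 0) consists exactly of the vector (−∞, −∞) together with all finite vectors (x₁, x₂) ∈ ℝ² satisfying min(γ, δ) + x₂ ≤ x₁ ≤ x₂ + max(γ, δ). -/
/-- in the max-plus semiring `ℝ_max = (ℝ ∪ {−∞}, max, +)`, for all
real `γ, δ`, the subsemimodule of `(ℝ_max)²` spanned by the vectors `(γ, 0)` and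
`(δ, 0)` consists of the vector `(−∞, −∞)` together with all finite vectors
`(x₁, x₂) ∈ ℝ²` with `min γ δ + x₂ ≤ x₁ ≤ x₂ + max γ δ`.
Here a max-plus linear combination of the two generators `a, b` is
`λ ⊗ a ⊕ μ ⊗ b`, i.e. entrywise `max (λ + aᵢ) (μ + bᵢ)`, with scalars
`λ, μ ∈ ℝ ∪ {−∞}` (taking both scalars `−∞` yields the zero vector, so this
describes all finite max-plus linear combinations). -/
theorem span_two_vectors_maxplus (γ δ : ℝ) :
    {x : Fin 2 → WithBot ℝ |
        ∃ lam mu : WithBot ℝ,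
          x 0 = max (lam + (γ : WithBot ℝ)) (mu + (δ : WithBot ℝ)) ∧
          x 1 = max (lam + (0 : WithBot ℝ)) (mu + (0 : WithBot ℝ))} =
      {x | x 0 = ⊥ ∧ x 1 = ⊥} ∪
        {x | ∃ x₁ x₂ : ℝ, x 0 = (x₁ : WithBot ℝ) ∧ x 1 = (x₂ : WithBot ℝ) ∧
          min γ δ + x₂ ≤ x₁ ∧ x₁ ≤ x₂ + max γ δ} := by
  ext x
  simp only [Set.mem_setOf_eq, Set.mem_union, add_zero]
  constructor
  · rintro ⟨l, m, h0, h1⟩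
    induction l using WithBot.recBotCoe with
    | bot =>
      induction m using WithBot.recBotCoe with
      | bot => left; simp [h0, h1]
      | coe m =>
        right
        refine ⟨m + δ, m, by simp [h0], by simp [h1], ?_, ?_⟩
        · linarith [min_le_right γ δ]
        · linarith [le_max_right γ δ]
    | coe l =>
      induction m using WithBot.recBotCoe with
      | bot =>
        right
        refine ⟨l + γ, l, by simp [h0], by simp [h1], ?_, ?_⟩
        · linarith [min_le_left γ δ]
        · linarith [le_max_left γ δ]
      | coe m =>
        right
        refine ⟨max (l + γ) (m + δ), max l m, by rw [h0]; norm_cast, by rw [h1]; norm_cast, ?_, ?_⟩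
        · rcases max_cases l m with ⟨h, _⟩ | ⟨h, _⟩ <;> rw [h]
          · linarith [min_le_left γ δ, le_max_left (l + γ) (m + δ)]
          · linarith [min_le_right γ δ, le_max_right (l + γ) (m + δ)]
        · apply max_le
          · linarith [le_max_left γ δ, le_max_left l m]
          · linarith [le_max_right γ δ, le_max_right l m]
  · rintro (⟨h0, h1⟩ | ⟨a, b, h0, h1, h2, h3⟩)
    · exact ⟨⊥, ⊥, by simp [h0], by simp [h1]⟩
    · rcases le_total γ δ with h | h
      · rw [min_eq_left h] at h2
        rw [max_eq_right h] at h3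
        refine ⟨(b : ℝ), ((a - δ : ℝ) : WithBot ℝ), ?_, ?_⟩
        · rw [h0, ← WithBot.coe_add, ← WithBot.coe_add, ← WithBot.coe_max,
            max_eq_right (by linarith), sub_add_cancel]
        · rw [h1, ← WithBot.coe_max, max_eq_left (by linarith)]
      · rw [min_eq_right h] at h2
        rw [max_eq_left h] at h3
        refine ⟨((a - γ : ℝ) : WithBot ℝ), (b : ℝ), ?_, ?_⟩
        · rw [h0, ← WithBot.coe_add, ← WithBot.coe_add, ← WithBot.coe_max,
            max_eq_left (by linarith), sub_add_cancel]
        · rw [h1, ← WithBot.coe_max, max_eq_right (by linarith)]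
end

section
/- Sums and Cartesian products of rational semimodules are rational: if X, Y ⊆ S^n and Z ⊆ S^p are rational subsemimodules over an arbitrary semiring S, then X ⊕ Y (the semimodule of sums x ⊕ y with x ∈ X, y ∈ Y) and X × Z (viewed inside S^{n+p}) are rational semimodules. -/
open scoped Pointwise

/-- Rational subsets of a monoid: the smallest class of subsets containing the
finite sets and closed under union, elementwise product, and Kleene star
(submonoid generated). -/
inductive IsRational {M : Type*} [Monoid M] : Set M → Prop
  | finite (U : Set M) : U.Finite → IsRational U
  | union (U V : Set M) : IsRational U → IsRational V → IsRational (U ∪ V)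
  | mul (U V : Set M) : IsRational U → IsRational V → IsRational (U * V)
  | star (U : Set M) : IsRational U → IsRational (Submonoid.closure U : Set M)

/-- The subsemimodule spanned by a set `G`: all finite `S`-linear combinations. -/
def SpanSet (S : Type*) {V : Type*} [Semiring S] [AddCommMonoid V] [Module S V]
    (G : Set V) : Set V :=
  {x | ∃ (k : ℕ) (c : Fin k → S) (u : Fin k → V), (∀ i, u i ∈ G) ∧ x = ∑ i, c i • u i}

/-- A subsemimodule is rational if it is spanned by a rational subset of the
multiplicative (entrywise) monoid. -/
def IsRatSemimodule {S V : Type*} [Semiring S] [Monoid V] [AddCommMonoid V] [Module S V]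
    (X : Set V) : Prop :=
  ∃ G : Set V, IsRational G ∧ X = SpanSet S G

theorem spanSet_eq_span {S V : Type*} [Semiring S] [AddCommMonoid V] [Module S V] (G : Set V) :
    SpanSet S G = (Submodule.span S G : Set V) := by
  ext x
  rw [SetLike.mem_coe, Submodule.mem_span_set']
  constructor
  · rintro ⟨k, c, u, hu, rfl⟩
    exact ⟨k, c, fun i => ⟨u i, hu i⟩, rfl⟩
  · rintro ⟨k, c, u, rfl⟩
    exact ⟨k, c, fun i => u i, fun i => (u i).2, rfl⟩

theorem IsRational.image_hom {M N : Type*} [Monoid M] [Monoid N] (f : M →* N) {U : Set M}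
    (h : IsRational U) : IsRational (f '' U) := by
  induction h with
  | finite U hU => exact .finite _ (hU.image f)
  | union U V _ _ hU hV => rw [Set.image_union]; exact .union _ _ hU hV
  | mul U V _ _ hU hV => rw [Set.image_mul]; exact .mul _ _ hU hV
  | star U _ hU =>
    rw [← Submonoid.coe_map, MonoidHom.map_mclosure]
    exact .star _ hU

theorem IsRational.image_inl {S A B : Type*} [Semiring S] [Semiring A] [Semiring B]
    [Module S A] [Module S B] {U : Set A}
    (h : IsRational U) : IsRational (LinearMap.inl S A B '' U) := by
  have := IsRational.mul _ _ (h.image_hom (MonoidHom.inl A B))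
    (.finite {((1 : A), (0 : B))} (Set.finite_singleton _))
  convert this using 1
  ext x
  simp [Set.mem_mul]

theorem IsRational.image_inr {S A B : Type*} [Semiring S] [Semiring A] [Semiring B]
    [Module S A] [Module S B] {U : Set B}
    (h : IsRational U) : IsRational (LinearMap.inr S A B '' U) := by
  have := IsRational.mul _ _ (h.image_hom (MonoidHom.inr A B))
    (.finite {((0 : A), (1 : B))} (Set.finite_singleton _))
  convert this using 1
  ext x
  simp [Set.mem_mul]

/-- over an arbitrary semiring `S`, if `X, Y ⊆ S^n` and `Z ⊆ S^p`
are rational semimodules, then the sum `X ⊕ Y = {x ⊕ y : x ∈ X, y ∈ Y}` and the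
Cartesian product `X × Z` (inside `S^{n+p}`) are rational semimodules. Here the
monoid structure used for rationality is the entrywise product `⊗`. -/
theorem sum_and_prod_of_rational_semimodules {S : Type*} [Semiring S] {n p : ℕ}
    (X Y : Set (Fin n → S)) (Z : Set (Fin p → S))
    (hX : IsRatSemimodule (S := S) X) (hY : IsRatSemimodule (S := S) Y)
    (hZ : IsRatSemimodule (S := S) Z) :
    IsRatSemimodule (S := S) (X + Y) ∧ IsRatSemimodule (S := S) (X ×ˢ Z) := by
  obtain ⟨G, hG, rfl⟩ := hX
  obtain ⟨H, hH, rfl⟩ := hY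
  obtain ⟨K, hK, rfl⟩ := hZ
  refine ⟨⟨G ∪ H, .union _ _ hG hH, ?_⟩,
    ⟨_, .union _ _ (hG.image_inl (S := S) (B := Fin p → S))
      (hK.image_inr (S := S) (A := Fin n → S)), ?_⟩⟩
  · simp only [spanSet_eq_span]
    rw [Submodule.span_union, Submodule.coe_sup]
  · simp only [spanSet_eq_span]
    rw [LinearMap.span_inl_union_inr, Submodule.prod_coe]
end

section
/- Characterization of rational semimodules via definability: let S be an idempotent commutative semiring with the Presburger property whose natural order is total. A subset X ⊆ S^n is a rational semimodule if and only if X is a subsemimodule of S^n and X is itself a rational subset of the monoid (S^n, ⊗). -/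
open scoped Pointwise

/-- First-order (Presburger) formulas of `(S, e, ⊗, ⪯)`: atoms are
`⊗ xᵢ^{kᵢ} ⪯ ⊗ xⱼ^{rⱼ}`, closed under `∧`, `∨`, `¬`, `∃`. -/
inductive PFormula : ℕ → Type
  | atom {n : ℕ} (k r : Fin n → ℕ) : PFormula n
  | and {n : ℕ} : PFormula n → PFormula n → PFormula n
  | or {n : ℕ} : PFormula n → PFormula n → PFormula n
  | not {n : ℕ} : PFormula n → PFormula n
  | ex {n : ℕ} : PFormula (n + 1) → PFormula n

/-- Satisfaction in an idempotent semiring, where the natural order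
`x ⪯ y` is expressed as `x + y = y`. -/
def PFormula.Sat {S : Type*} [CommSemiring S] :
    ∀ {n : ℕ}, PFormula n → (Fin n → S) → Prop
  | _, atom k r, v => (∏ i, v i ^ k i) + (∏ i, v i ^ r i) = ∏ i, v i ^ r i
  | _, and f g, v => f.Sat v ∧ g.Sat v
  | _, or f g, v => f.Sat v ∨ g.Sat v
  | _, not f, v => ¬ f.Sat v
  | _, ex f, v => ∃ x : S, f.Sat (Fin.cons x v)

/-- A subsemimodule of `S^n` in the sense of the paper: contains the zero
vector and is closed under linear combinations. -/
def IsSubsemimodule {S : Type*} [Semiring S] {n : ℕ} (X : Set (Fin n → S)) : Prop :=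
  (0 : Fin n → S) ∈ X ∧ ∀ x ∈ X, ∀ y ∈ X, ∀ a b : S, a • x + b • y ∈ X

section Helpers

variable {S : Type*} [CommSemiring S]

/-- Definability of a predicate on `S^m`. -/
def PDef {m : ℕ} (P : (Fin m → S) → Prop) : Prop := ∃ f : PFormula m, ∀ v, f.Sat v ↔ P v

theorem PDef.and {m : ℕ} {P Q : (Fin m → S) → Prop} (hP : PDef P) (hQ : PDef Q) :
    PDef (fun v => P v ∧ Q v) := by
  obtain ⟨f, hf⟩ := hP
  obtain ⟨g, hg⟩ := hQ
  exact ⟨.and f g, fun v => by simp [PFormula.Sat, hf, hg]⟩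

theorem PDef.or {m : ℕ} {P Q : (Fin m → S) → Prop} (hP : PDef P) (hQ : PDef Q) :
    PDef (fun v => P v ∨ Q v) := by
  obtain ⟨f, hf⟩ := hP
  obtain ⟨g, hg⟩ := hQ
  exact ⟨.or f g, fun v => by simp [PFormula.Sat, hf, hg]⟩

theorem PDef.not {m : ℕ} {P : (Fin m → S) → Prop} (hP : PDef P) :
    PDef (fun v => ¬ P v) := by
  obtain ⟨f, hf⟩ := hP
  exact ⟨.not f, fun v => by simp [PFormula.Sat, hf]⟩

theorem PDef.ex {m : ℕ} {P : (Fin (m + 1) → S) → Prop} (hP : PDef P) :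
    PDef (fun v : Fin m → S => ∃ x : S, P (Fin.cons x v)) := by
  obtain ⟨f, hf⟩ := hP
  exact ⟨.ex f, fun v => by simp [PFormula.Sat, hf]⟩

theorem PDef.congr {m : ℕ} {P Q : (Fin m → S) → Prop} (hP : PDef P) (h : ∀ v, P v ↔ Q v) :
    PDef Q := by
  obtain ⟨f, hf⟩ := hP
  exact ⟨f, fun v => (hf v).trans (h v)⟩

theorem PDef.rename_aux {n : ℕ} (f : PFormula n) :
    ∀ {m : ℕ} (σ : Fin n → Fin m), PDef (fun v : Fin m → S => f.Sat (fun i => v (σ i))) := by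
  induction f with
  | @atom n k r =>
    intro m σ
    have key : ∀ (k : Fin n → ℕ) (v : Fin m → S),
        ∏ j, v j ^ (∑ i with σ i = j, k i) = ∏ i, v (σ i) ^ k i := by
      intro k v
      rw [← Finset.prod_fiberwise Finset.univ σ]
      refine Finset.prod_congr rfl fun j _ => ?_
      rw [← Finset.prod_pow_eq_pow_sum]
      refine Finset.prod_congr rfl fun i hi => ?_
      rw [(Finset.mem_filter.1 hi).2]
    refine ⟨.atom (fun j => ∑ i with σ i = j, k i) (fun j => ∑ i with σ i = j, r i), fun v => ?_⟩
    simp only [PFormula.Sat, key]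
  | and f g hf hg => intro m σ; exact (hf σ).and (hg σ)
  | or f g hf hg => intro m σ; exact (hf σ).or (hg σ)
  | not f hf => intro m σ; exact (hf σ).not
  | @ex n f hf =>
    intro m σ
    refine (hf (Fin.cons 0 (fun i => (σ i).succ))).ex.congr fun v => ?_
    simp only [PFormula.Sat]
    refine exists_congr fun x => ?_
    have : (fun i => (Fin.cons x v : Fin (m + 1) → S)
        ((Fin.cons 0 (fun i => (σ i).succ) : Fin (n + 1) → Fin (m + 1)) i))
        = Fin.cons x (fun i => v (σ i)) := by
      funext i
      refine Fin.cases ?_ (fun i => ?_) i <;> simp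
    rw [this]

theorem PDef.rename {n m : ℕ} {P : (Fin n → S) → Prop} (hP : PDef P) (σ : Fin n → Fin m) :
    PDef (fun v : Fin m → S => P (fun i => v (σ i))) := by
  obtain ⟨f, hf⟩ := hP
  exact (PDef.rename_aux f σ).congr fun v => hf _

theorem PDef.true (hid : ∀ a : S, a + a = a) {m : ℕ} : PDef (fun _ : Fin m → S => True) :=
  ⟨.atom 0 0, fun v => by simp [PFormula.Sat, hid]⟩

theorem PDef.all_mem (hid : ∀ a : S, a + a = a) {m : ℕ} {ι : Type*}
    {P : ι → (Fin m → S) → Prop} (hP : ∀ i, PDef (P i)) (s : Finset ι) :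
    PDef (fun v => ∀ i ∈ s, P i v) := by
  classical
  induction s using Finset.induction_on with
  | empty => exact (PDef.true hid).congr fun v => by simp
  | insert a s ha ih => exact ((hP a).and ih).congr fun v => by simp

theorem PDef.all (hid : ∀ a : S, a + a = a) {m : ℕ} {ι : Type*} [Fintype ι]
    {P : ι → (Fin m → S) → Prop} (hP : ∀ i, PDef (P i)) :
    PDef (fun v => ∀ i, P i v) :=
  (PDef.all_mem hid hP Finset.univ).congr fun v => by simp

theorem PDef.exists_fin (hid : ∀ a : S, a + a = a) {m : ℕ} {ι : Type*} [Fintype ι]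
    {P : ι → (Fin m → S) → Prop} (hP : ∀ i, PDef (P i)) :
    PDef (fun v => ∃ i, P i v) :=
  (PDef.all hid fun i => (hP i).not).not.congr fun v => by simp

theorem PDef.ex_many {m : ℕ} (p : ℕ) : ∀ {Q : (Fin (m + p) → S) → Prop}, PDef Q →
    PDef (fun v : Fin m → S => ∃ z : Fin (m + p) → S, (∀ i, z (Fin.addNat i p) = v i) ∧ Q z) := by
  induction p with
  | zero =>
    intro Q hQ
    refine hQ.congr fun v => ⟨fun h => ⟨v, fun i => rfl, h⟩, ?_⟩
    rintro ⟨z, hz, h⟩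
    have : z = v := funext hz
    exact this ▸ h
  | succ p ih =>
    intro Q hQ
    have hQ' : PDef (fun z : Fin (m + p) → S => ∃ x : S, Q (Fin.cons x z)) := PDef.ex (m := m + p) hQ
    refine (ih hQ').congr fun v => ⟨?_, ?_⟩
    · rintro ⟨z, hz, x, h⟩
      exact ⟨Fin.cons x z, fun i => hz i, h⟩
    · rintro ⟨z, hz, h⟩
      refine ⟨fun i => z (Fin.succ i), fun i => hz i, z 0, ?_⟩
      have : (Fin.cons (z 0) (fun i : Fin (m + p) => z (Fin.succ i)) : Fin (m + p + 1) → S) = z :=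
        Fin.cons_self_tail z
      rw [this]
      exact h

theorem prod_pow_single {m : ℕ} (z : Fin m → S) (a : Fin m) :
    ∏ i, z i ^ (Pi.single a 1 : Fin m → ℕ) i = z a := by
  rw [Finset.prod_eq_single a]
  · simp
  · intro b _ hb; simp [hb]
  · simp

theorem prod_pow_pair {m : ℕ} (z : Fin m → S) (a b : Fin m) :
    ∏ i, z i ^ ((Pi.single a 1 + Pi.single b 1 : Fin m → ℕ) i) = z a * z b := by
  simp only [Pi.add_apply, pow_add, Finset.prod_mul_distrib, prod_pow_single]

theorem PDef.atom_le {m : ℕ} (a b c : Fin m) :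
    PDef (fun z : Fin m → S => z a * z b + z c = z c) :=
  ⟨.atom (Pi.single a 1 + Pi.single b 1) (Pi.single c 1), fun v => by
    simp only [PFormula.Sat, prod_pow_single, prod_pow_pair]⟩

theorem PDef.atom_ge {m : ℕ} (a b c : Fin m) :
    PDef (fun z : Fin m → S => z c + z a * z b = z a * z b) :=
  ⟨.atom (Pi.single c 1) (Pi.single a 1 + Pi.single b 1), fun v => by
    simp only [PFormula.Sat, prod_pow_single, prod_pow_pair]⟩

theorem sum_le_aux {ι : Type*} (s : Finset ι) (y : ι → S) (x : S)
    (h : ∀ j ∈ s, y j + x = x) : ∑ j ∈ s, y j + x = x := by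
  classical
  induction s using Finset.induction_on with
  | empty => simp
  | insert a s ha ih =>
    rw [Finset.sum_insert ha, add_assoc, ih fun j hj => h j (Finset.mem_insert_of_mem hj),
      h a (Finset.mem_insert_self _ _)]

theorem le_sum_aux (hid : ∀ a : S, a + a = a) {ι : Type*} (s : Finset ι) (y : ι → S) {j : ι}
    (hj : j ∈ s) : y j + ∑ j ∈ s, y j = ∑ j ∈ s, y j := by
  classical
  rw [← Finset.add_sum_erase s y hj, ← add_assoc, hid]

theorem sum_attained (htot : ∀ x y : S, x + y = y ∨ x + y = x) {ι : Type*} (s : Finset ι)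
    (y : ι → S) (hs : s.Nonempty) : ∃ j ∈ s, ∑ j ∈ s, y j = y j := by
  classical
  induction hs using Finset.Nonempty.cons_induction with
  | singleton a => exact ⟨a, by simp⟩
  | cons a s ha hs ih =>
    obtain ⟨j, hj, h⟩ := ih
    rw [Finset.sum_cons, h]
    rcases htot (y a) (y j) with h' | h'
    · exact ⟨j, by simp [hj], h'⟩
    · exact ⟨a, by simp, h'⟩

theorem eq_sum_iff (hid : ∀ a : S, a + a = a) (htot : ∀ x y : S, x + y = y ∨ x + y = x)
    {ι : Type*} [Fintype ι] [Nonempty ι] (y : ι → S) (x : S) :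
    x = ∑ j, y j ↔ (∀ j, y j + x = x) ∧ ∃ j, x + y j = y j := by
  constructor
  · rintro rfl
    refine ⟨fun j => le_sum_aux hid _ y (Finset.mem_univ j), ?_⟩
    obtain ⟨j, _, h⟩ := sum_attained htot Finset.univ y Finset.univ_nonempty
    exact ⟨j, by rw [h, hid]⟩
  · rintro ⟨h1, j, h2⟩
    have hx : x = y j := by rw [← h1 j, add_comm, h2]
    have h3 := sum_le_aux Finset.univ y x fun j _ => h1 j
    have h4 := le_sum_aux hid Finset.univ y (Finset.mem_univ j)
    rw [← hx, add_comm, h3] at h4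
    exact h4

/-- Max-plus Caratheodory. -/
theorem mem_span_iff (hid : ∀ a : S, a + a = a) (htot : ∀ x y : S, x + y = y ∨ x + y = x)
    {n : ℕ} [Nonempty (Fin n)] (G : Set (Fin n → S)) (hG : G.Nonempty) (x : Fin n → S) :
    x ∈ SpanSet S G ↔ ∃ (c : Fin n → S) (u : Fin n → Fin n → S),
      (∀ j, u j ∈ G) ∧ ∀ l, x l = ∑ j, c j * u j l := by
  constructor
  · rintro ⟨k, c, u, hu, rfl⟩
    rcases Nat.eq_zero_or_pos k with rfl | hk
    · obtain ⟨g, hg⟩ := hG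
      exact ⟨0, fun _ => g, fun _ => hg, fun l => by simp⟩
    · haveI : Nonempty (Fin k) := ⟨⟨0, hk⟩⟩
      have h := fun l => (eq_sum_iff hid htot (fun j => c j * u j l) _).1 rfl
      choose h1 φ h2 using h
      refine ⟨fun j => c (φ j), fun j => u (φ j), fun j => hu _, fun l => ?_⟩
      have e : (∑ i, c i • u i) l = ∑ j, c j * u j l := by simp [Finset.sum_apply]
      rw [e, eq_sum_iff hid htot]
      exact ⟨fun j => h1 l (φ j), l, h2 l⟩
  · rintro ⟨c, u, hu, h⟩
    exact ⟨n, c, u, hu, funext fun l => by simp [Finset.sum_apply, h]⟩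

theorem spanSet_isSub {n : ℕ} (G : Set (Fin n → S)) : IsSubsemimodule (SpanSet S G) := by
  refine ⟨⟨0, Fin.elim0, Fin.elim0, fun i => i.elim0, by simp⟩, ?_⟩
  rintro _ ⟨k, c, u, hu, rfl⟩ _ ⟨k', c', u', hu', rfl⟩ a b
  refine ⟨k + k', Fin.append (fun i => a * c i) (fun i => b * c' i), Fin.append u u', ?_, ?_⟩
  · intro i
    refine Fin.addCases (fun i => ?_) (fun i => ?_) i
    · simpa using hu i
    · simpa using hu' i
  · rw [Fin.sum_univ_add]
    simp [Finset.smul_sum, mul_smul]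

theorem spanSet_self {n : ℕ} {X : Set (Fin n → S)} (hX : IsSubsemimodule X) :
    X = SpanSet S X := by
  ext x
  constructor
  · intro hx
    exact ⟨1, fun _ => 1, fun _ => x, fun _ => hx, by simp⟩
  · rintro ⟨k, c, u, hu, rfl⟩
    induction k with
    | zero => simpa using hX.1
    | succ k ih =>
      rw [Fin.sum_univ_succ]
      have := hX.2 _ (hu 0) _ (ih (fun i => c i.succ) (fun i => u i.succ) fun i => hu _) (c 0) 1
      simpa using this

theorem span_PDef (hid : ∀ a : S, a + a = a) (htot : ∀ x y : S, x + y = y ∨ x + y = x)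
    {n : ℕ} [Nonempty (Fin n)] (G : Set (Fin n → S)) (hG : G.Nonempty)
    (hd : PDef (fun v => v ∈ G)) : PDef (fun v => v ∈ SpanSet S G) := by
  let p := n + n * n
  let e : Fin n ⊕ Fin n × Fin n ≃ Fin p := (Equiv.sumCongr (Equiv.refl _) finProdFinEquiv).trans finSumFinEquiv
  let lo : Fin p → Fin (n + p) := fun i => ⟨i, by omega⟩
  let C : Fin n → Fin (n + p) := fun j => lo (e (.inl j))
  let U : Fin n → Fin n → Fin (n + p) := fun j l => lo (e (.inr (j, l)))
  let X : Fin n → Fin (n + p) := fun l => Fin.addNat l p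
  have hQ : PDef (fun z : Fin (n + p) → S => (∀ j, (fun l => z (U j l)) ∈ G) ∧
      ∀ l, (∀ j, z (C j) * z (U j l) + z (X l) = z (X l)) ∧
        ∃ j, z (X l) + z (C j) * z (U j l) = z (C j) * z (U j l)) := by
    refine (PDef.all hid fun j => hd.rename (U j)).and (PDef.all hid fun l =>
      (PDef.all hid fun j => PDef.atom_le _ _ _).and
        (PDef.exists_fin hid fun j => PDef.atom_ge _ _ _))
  refine (PDef.ex_many p hQ).congr fun v => ?_
  rw [mem_span_iff hid htot G hG]
  constructor
  · rintro ⟨z, hz, h1, h2⟩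
    refine ⟨fun j => z (C j), fun j l => z (U j l), h1, fun l => ?_⟩
    rw [eq_sum_iff hid htot, ← hz l]
    exact h2 l
  · rintro ⟨c, u, hu, h⟩
    let w : Fin p → S := fun i => Sum.elim c (fun q => u q.1 q.2) (e.symm i)
    let z : Fin (n + p) → S := fun i =>
      if hi : (i : ℕ) < p then w ⟨i, hi⟩ else v ⟨i - p, by omega⟩
    have zlo : ∀ i, z (lo i) = w i := fun i => by simp [z, lo]
    have zX : ∀ l, z (X l) = v l := fun l => by simp [z, X]
    have zC : ∀ j, z (C j) = c j := fun j => by simp [C, zlo, w]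
    have zU : ∀ j l, z (U j l) = u j l := fun j l => by simp [U, zlo, w]
    refine ⟨z, zX, fun j => ?_, fun l => ?_⟩
    · simpa only [zU] using hu j
    · simp only [zX, zC, zU]
      exact (eq_sum_iff hid htot _ _).1 (h l)

end Helpers

/-- let `S` be an idempotent commutative semiring whose natural
order is total and which has the Presburger property (definable sets of `S^n`
coincide with rational subsets of `(S^n, ⊗)`). Then `X ⊆ S^n` is a rational
semimodule (spanned by a rational set) iff `X` is a subsemimodule of `S^n`
and itself a rational subset of the monoid `(S^n, ⊗)`. -/
theorem rational_semimodule_iff_rational_set {S : Type*} [CommSemiring S]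
    (hid : ∀ a : S, a + a = a)
    (htot : ∀ x y : S, x + y = y ∨ x + y = x)
    (hpres : ∀ (m : ℕ) (D : Set (Fin m → S)),
      (∃ f : PFormula m, D = {v | f.Sat v}) ↔ IsRational D)
    {n : ℕ} (X : Set (Fin n → S)) :
    (∃ G : Set (Fin n → S), IsRational G ∧ X = SpanSet S G) ↔
      (IsSubsemimodule X ∧ IsRational X) := by
  constructor
  · rintro ⟨G, hG, rfl⟩
    refine ⟨spanSet_isSub G, ?_⟩
    rcases Nat.eq_zero_or_pos n with rfl | hn
    · exact IsRational.finite _ (Set.toFinite _)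
    haveI : Nonempty (Fin n) := ⟨⟨0, hn⟩⟩
    rcases G.eq_empty_or_nonempty with rfl | hne
    · refine IsRational.finite _ ((Set.finite_singleton 0).subset ?_)
      rintro x ⟨k, c, u, hu, rfl⟩
      have : IsEmpty (Fin k) := ⟨fun i => hu i⟩
      simp
    · obtain ⟨f, hf⟩ := (hpres n G).2 hG
      have hd : PDef (fun v => v ∈ G) := ⟨f, fun v => by rw [hf]; rfl⟩
      obtain ⟨g, hg⟩ := span_PDef hid htot G hne hd
      exact (hpres n _).1 ⟨g, Set.ext fun v => (hg v).symm⟩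
  · rintro ⟨h1, h2⟩
    exact ⟨X, h2, spanSet_self h1⟩
end
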